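/- If the weights a of the weighted arrangement (𝒜,a) are such that every dense edge has nonzero weight, then the contravariant form S^{(a)} on the flag spaces 𝓕^p(𝒜) is nondegenerate, and consequently the dimension of the space of singular vectors Sing 𝓕^k(𝒜) (the annihilator of ν(a)·OS^{k−1}(𝒜)) equals the absolute value of the Euler characteristic of the complement U = ℂ^k − ∪_j H_j. -/

import Mathlib

/-!
The space `OS^p` is the quotient of the free module on `p`-tuples by the given relations; its dual
is the flag space `𝓕^p`. Three kinds of operators on `OS` are used: the transposed flag
differential `D : OS^{p+1} → OS^p` (`∂` on independent monomials, zero on dependent ones), the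
multiplications `H_j` by a generator with `ν(a) = ∑ a_j H_j`, and the projections `P_C` onto the
summands of the grading by flats.

*Nondegeneracy.* The contravariant form is viewed as a map `S : (OS^p)* → OS^p` (`shap`), with
`φ (S ψ)` the value of the form (`pairing_shap`). It commutes with the projections `P_C`
(`shap_P`) and satisfies `S (ψ ∘ D) = ν(a) · S ψ` (`shap_D`). It is surjective by induction on `p`
(`shap_surjective`): let `e_s` be an independent monomial with flat `C`, and let `J ⊆ C` be a minimal
nonempty subset whose normals are independent from those of `C \ J`. Then `J` is the set of
hyperplanes through a dense edge, so its weight `a_J` is nonzero (`exists_component`), and the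
`C`-component of `ν(a) · ∑_{s_i ∈ J} (-1)^i e_{s \ s_i}` is `a_J e_s` (`component_identity`): by the
relations, the summand of `j ∈ C` contributes `a_j e_s` for `j ∈ J` and zero for `j ∉ J`, while
hyperplanes outside `C` land in other components. Surjectivity of `S` for the self-dual pairing is
nondegeneracy.

*Dimension.* Singular vectors form the dual of `OS^{k+1} / ν(a) OS^k`. As `S` is bijective, `ν(a)`
and `D` have the same rank (`finrank_range_nu`). The complex `(OS, D)` is exact below the top degree
(`exact_D`): `id - D H_j - H_j D` sends monomials to monomials whose normals span a space containing
`g_j`, and after running through all `j` nothing is left in degrees at most `k`, because the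
arrangement is essential. Hence the Euler characteristic telescopes (`euler_partial`) to
`± (dim OS^{k+1} - rank D) = ± dim Sing`.
-/

open scoped Classical

namespace OSArr

variable {E : Type*} [AddCommGroup E] [Module ℂ E] {n p : ℕ}

/-! ### Linear algebra of affine hyperplanes -/

/-- The flat `⋂ i, H_{js i}` of a tuple of hyperplanes `H_j = {g j + z j = 0}`, recorded as the set
of (indices of) all hyperplanes that contain it. For an empty intersection it is everything. -/
def flat (g : Fin n → (E →ₗ[ℂ] ℂ)) (z : Fin n → ℂ) (js : Fin p → Fin n) : Set (Fin n) :=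
  {j | ∀ t : E, (∀ i, g (js i) t + z (js i) = 0) → g j t + z j = 0}

/-- The hyperplanes of the tuple have a common point. -/
def Meets (g : Fin n → (E →ₗ[ℂ] ℂ)) (z : Fin n → ℂ) (js : Fin p → Fin n) : Prop :=
  ∃ t : E, ∀ i, g (js i) t + z (js i) = 0

variable {g : Fin n → (E →ₗ[ℂ] ℂ)} {z : Fin n → ℂ}

lemma mem_span_of_vanish {ι : Type*} [Finite ι] (f : ι → E →ₗ[ℂ] ℂ) (l : E →ₗ[ℂ] ℂ)
    (h : ∀ v, (∀ i, f i v = 0) → l v = 0) : l ∈ Submodule.span ℂ (Set.range f) := by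
  apply mem_span_of_iInf_ker_le_ker
  intro v hv
  simp only [Submodule.mem_iInf, LinearMap.mem_ker] at hv ⊢
  exact h v hv

lemma vanish_of_mem_span {s : Set (E →ₗ[ℂ] ℂ)} {l : E →ₗ[ℂ] ℂ} (h : l ∈ Submodule.span ℂ s)
    (v : E) (hv : ∀ f ∈ s, f v = 0) : l v = 0 := by
  induction h using Submodule.span_induction with
  | mem x hx => exact hv x hx
  | zero => simp
  | add x y _ _ hx hy => simp [hx, hy]
  | smul c x _ hx => simp [hx]

/-- Functionals that vanish along the flat of hyperplanes through `t` lie in the span of their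
normals. -/
lemma mem_span_of_flat {ι : Type*} [Finite ι] (f : ι → Fin n) (j : Fin n) (t : E)
    (ht : ∀ i, g (f i) t + z (f i) = 0)
    (h : ∀ t : E, (∀ i, g (f i) t + z (f i) = 0) → g j t + z j = 0) :
    g j ∈ Submodule.span ℂ (Set.range (g ∘ f)) := by
  apply mem_span_of_vanish
  intro v hv
  have h1 := h (t + v) (fun i => by
    have := hv i
    simp only [Function.comp] at this
    rw [map_add, this, add_zero, ht i])
  have h2 := h t ht
  rw [map_add] at h1
  linear_combination h1 - h2

lemma mem_flat_of_mem_span {js : Fin p → Fin n} {j : Fin n} {t₀ : E}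
    (ht : ∀ i, g (js i) t₀ + z (js i) = 0) (hj : g j t₀ + z j = 0)
    (h : g j ∈ Submodule.span ℂ (Set.range (g ∘ js))) : j ∈ flat g z js := by
  intro t hts
  have := vanish_of_mem_span h (t - t₀) (by
    rintro _ ⟨i, rfl⟩
    simp only [Function.comp, map_sub]
    linear_combination hts i - ht i)
  rw [map_sub] at this
  linear_combination this + hj

/-- If the normal of `H_j` is not in the span of the normals of a tuple with a common point, the
common point can be moved onto `H_j`. -/
lemma exists_common (js : Fin p → Fin n) (j : Fin n) (hm : Meets g z js)
    (h : g j ∉ Submodule.span ℂ (Set.range (g ∘ js))) :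
    ∃ t : E, (∀ i, g (js i) t + z (js i) = 0) ∧ g j t + z j = 0 := by
  obtain ⟨t, ht⟩ := hm
  have : ∃ v, (∀ i, (g ∘ js) i v = 0) ∧ g j v ≠ 0 := by
    by_contra! hc
    exact h (mem_span_of_vanish _ _ hc)
  obtain ⟨v, hv, hjv⟩ := this
  refine ⟨t - ((g j t + z j) / g j v) • v, fun i => ?_, ?_⟩
  · have := hv i
    simp only [Function.comp] at this
    rw [map_sub, map_smul, this, smul_zero, sub_zero, ht i]
  · rw [map_sub, map_smul, smul_eq_mul, div_mul_cancel₀ _ hjv]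
    ring

lemma comp_cons (j : Fin n) (js : Fin p → Fin n) :
    g ∘ (Fin.cons j js : Fin (p+1) → Fin n) = Fin.cons (g j) (g ∘ js) := by
  ext i
  refine Fin.cases ?_ (fun i => ?_) i <;> simp

lemma li_cons {j : Fin n} {js : Fin p → Fin n} :
    LinearIndependent ℂ (g ∘ (Fin.cons j js : Fin (p+1) → Fin n)) ↔
      LinearIndependent ℂ (g ∘ js) ∧ g j ∉ Submodule.span ℂ (Set.range (g ∘ js)) := by
  rw [comp_cons, linearIndependent_finCons]

lemma meets_of_li : ∀ {p : ℕ} (js : Fin p → Fin n), LinearIndependent ℂ (g ∘ js) → Meets g z js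
  | 0, js, _ => ⟨0, fun i => i.elim0⟩
  | p+1, js, h => by
    rw [← Fin.cons_self_tail js, li_cons] at h
    obtain ⟨t, h1, h2⟩ := exists_common _ _ (meets_of_li _ h.1) h.2
    refine ⟨t, fun i => ?_⟩
    refine Fin.cases h2 (fun i => h1 i) i

lemma li_perm (js : Fin p → Fin n) (σ : Equiv.Perm (Fin p)) :
    LinearIndependent ℂ (g ∘ (js ∘ σ)) ↔ LinearIndependent ℂ (g ∘ js) := by
  rw [← Function.comp_assoc]
  exact linearIndependent_equiv σ

lemma flat_perm (js : Fin p → Fin n) (σ : Equiv.Perm (Fin p)) :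
    flat g z (js ∘ σ) = flat g z js := by
  ext j
  simp only [flat, Set.mem_ofPred_eq, Function.comp]
  refine forall_congr' fun t => ?_
  rw [σ.forall_congr_left (p := fun i => g (js (σ i)) t + z (js (σ i)) = 0)]
  simp

/-- Moving the `i`-th entry of a tuple to the front is the inverse of the cycle `(0 1 … i)`. -/
lemma comp_cycleRange {α : Type*} (js : Fin (p+1) → α) (i : Fin (p+1)) :
    js ∘ (i.cycleRange.symm : Equiv.Perm _) = Fin.cons (js i) (js ∘ i.succAbove) := by
  ext x
  refine Fin.cases ?_ (fun x => ?_) x <;> simp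

lemma li_removal {js : Fin (p+1) → Fin n} (i : Fin (p+1)) :
    LinearIndependent ℂ (g ∘ js) ↔ LinearIndependent ℂ (g ∘ (js ∘ i.succAbove)) ∧
      g (js i) ∉ Submodule.span ℂ (Set.range (g ∘ (js ∘ i.succAbove))) := by
  rw [← li_perm js i.cycleRange.symm, comp_cycleRange, li_cons]

lemma li_face {js : Fin (p+1) → Fin n} (i : Fin (p+1)) (h : LinearIndependent ℂ (g ∘ js)) :
    LinearIndependent ℂ (g ∘ (js ∘ i.succAbove)) := ((li_removal i).1 h).1

lemma span_le_span_of_sub {q : ℕ} {js : Fin p → Fin n} {js' : Fin q → Fin n}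
    (h : ∀ i, g (js i) ∈ Submodule.span ℂ (Set.range (g ∘ js'))) :
    Submodule.span ℂ (Set.range (g ∘ js)) ≤ Submodule.span ℂ (Set.range (g ∘ js')) := by
  rw [Submodule.span_le]
  rintro _ ⟨i, rfl⟩
  exact h i

/-- An independent face of a dependent tuple spans the same space of normals. -/
lemma span_face {js : Fin (p+1) → Fin n} (i : Fin (p+1))
    (hd : ¬ LinearIndependent ℂ (g ∘ js)) (hi : LinearIndependent ℂ (g ∘ (js ∘ i.succAbove))) :
    ∀ l, g (js l) ∈ Submodule.span ℂ (Set.range (g ∘ (js ∘ i.succAbove))) := by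
  rw [li_removal i] at hd
  intro l
  rcases eq_or_ne l i with rfl | hl
  · by_contra hc; exact hd ⟨hi, hc⟩
  · obtain ⟨m, rfl⟩ := Fin.exists_succAbove_eq hl
    exact Submodule.subset_span ⟨m, rfl⟩

/-- An independent face of a dependent tuple with a common point has the same flat. -/
lemma flat_face {js : Fin (p+1) → Fin n} (i : Fin (p+1))
    (hd : ¬ LinearIndependent ℂ (g ∘ js)) (hm : Meets g z js)
    (hi : LinearIndependent ℂ (g ∘ (js ∘ i.succAbove))) :
    flat g z (js ∘ i.succAbove) = flat g z js := by
  obtain ⟨t₀, ht₀⟩ := hm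
  ext j
  refine ⟨fun h t ht => h t fun l => ht _, fun h t ht => h t fun l => ?_⟩
  exact mem_flat_of_mem_span (js := js ∘ i.succAbove) (fun _ => ht₀ _) (ht₀ l)
    (span_face i hd hi l) t ht

lemma cons_face {α : Type*} (j : α) (js : Fin (p+1) → α) (i : Fin (p+1)) :
    (Fin.cons j js : Fin (p+2) → α) ∘ i.succ.succAbove = Fin.cons j (js ∘ i.succAbove) := by
  ext x
  refine Fin.cases ?_ (fun x => ?_) x <;> simp

lemma cons_face_zero {α : Type*} (j : α) (js : Fin p → α) :
    (Fin.cons j js : Fin (p+1) → α) ∘ (0 : Fin (p+1)).succAbove = js := by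
  ext x
  simp


/-! ### Orlik–Solomon spaces -/

variable (g z) in
/-- The relations of the degree-`p` Orlik–Solomon space in the free module on `p`-tuples. -/
noncomputable def OSRel (p : ℕ) : Submodule ℂ ((Fin p → Fin n) →₀ ℂ) := Submodule.span ℂ (
      {x | ∃ js : Fin p → Fin n, ¬ LinearIndependent ℂ (g ∘ js) ∧
        x = Finsupp.single js 1} ∪
      {x | ∃ (js : Fin p → Fin n) (σ : Equiv.Perm (Fin p)),
        x = Finsupp.single js 1 -
          ((Equiv.Perm.sign σ : ℤ) : ℂ) • Finsupp.single (js ∘ σ) 1} ∪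
      {x | ∃ js : Fin (p+1) → Fin n, ¬ LinearIndependent ℂ (g ∘ js) ∧
        (∃ t : E, ∀ i, g (js i) t + z (js i) = 0) ∧
        x = ∑ i : Fin (p+1), ((-1 : ℂ) ^ (i : ℕ)) •
          Finsupp.single (js ∘ i.succAbove) 1})

variable (g z) in
/-- The degree-`p` Orlik–Solomon space. -/
abbrev OS (p : ℕ) : Type := ((Fin p → Fin n) →₀ ℂ) ⧸ OSRel g z p

variable (g z) in
/-- The class of the monomial `(H_{js 0}) ⋯ (H_{js (p-1)})`. -/
noncomputable def mon (js : Fin p → Fin n) : OS g z p := (OSRel g z p).mkQ (Finsupp.single js 1)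

variable (g z) in
/-- The boundary `∑ᵢ (-1)ⁱ (js 0, …, omit js i, …, js p)` of a tuple. -/
noncomputable def bdry (js : Fin (p+1) → Fin n) : OS g z p :=
  ∑ i : Fin (p+1), ((-1 : ℂ) ^ (i : ℕ)) • mon g z (js ∘ i.succAbove)

lemma mon_dep {js : Fin p → Fin n} (h : ¬ LinearIndependent ℂ (g ∘ js)) : mon g z js = 0 := by
  rw [mon, Submodule.mkQ_apply, Submodule.Quotient.mk_eq_zero]
  exact Submodule.subset_span (Or.inl (Or.inl ⟨js, h, rfl⟩))

lemma mon_perm (js : Fin p → Fin n) (σ : Equiv.Perm (Fin p)) :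
    mon g z js = ((Equiv.Perm.sign σ : ℤ) : ℂ) • mon g z (js ∘ σ) := by
  rw [← sub_eq_zero, mon, mon, ← map_smul, ← map_sub, Submodule.mkQ_apply,
    Submodule.Quotient.mk_eq_zero]
  exact Submodule.subset_span (Or.inl (Or.inr ⟨js, σ, rfl⟩))

lemma bdry_dep {js : Fin (p+1) → Fin n} (h : ¬ LinearIndependent ℂ (g ∘ js))
    (hm : Meets g z js) : bdry g z js = 0 := by
  have : bdry g z js = (OSRel g z p).mkQ (∑ i : Fin (p+1), ((-1 : ℂ) ^ (i : ℕ)) •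
          Finsupp.single (js ∘ i.succAbove) 1) := by
    simp only [bdry, mon, map_sum, map_smul]
  rw [this, Submodule.mkQ_apply, Submodule.Quotient.mk_eq_zero]
  exact Submodule.subset_span (Or.inr ⟨js, h, hm, rfl⟩)

lemma span_mon : Submodule.span ℂ (Set.range (mon g z : (Fin p → Fin n) → OS g z p)) = ⊤ := by
  have : (mon g z : (Fin p → Fin n) → OS g z p) =
      (OSRel g z p).mkQ ∘ (fun js => Finsupp.single js 1) := rfl
  rw [this, Set.range_comp, ← Submodule.map_span, ← Finsupp.coe_basisSingleOne,
    Module.Basis.span_eq, Submodule.map_top, Submodule.range_mkQ]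

lemma OS_induction {M : Submodule ℂ (OS g z p)}
    (h : ∀ js : Fin p → Fin n, LinearIndependent ℂ (g ∘ js) → mon g z js ∈ M) (x : OS g z p) :
    x ∈ M := by
  have : (⊤ : Submodule ℂ (OS g z p)) ≤ M := by
    rw [← span_mon, Submodule.span_le]
    rintro _ ⟨js, rfl⟩
    by_cases hl : LinearIndependent ℂ (g ∘ js)
    · exact h js hl
    · rw [mon_dep hl]; exact M.zero_mem
  exact this trivial

lemma OS_hom_ext {N : Type*} [AddCommGroup N] [Module ℂ N] {f f' : OS g z p →ₗ[ℂ] N}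
    (h : ∀ js : Fin p → Fin n, LinearIndependent ℂ (g ∘ js) → f (mon g z js) = f' (mon g z js)) :
    f = f' := by
  ext x
  exact OS_induction (M := LinearMap.eqLocus f f') h ((OSRel g z p).mkQ _)

/-- The universal property of the Orlik–Solomon space. -/
lemma exists_lift {N : Type*} [AddCommGroup N] [Module ℂ N] (f : (Fin p → Fin n) → N)
    (h1 : ∀ js, ¬ LinearIndependent ℂ (g ∘ js) → f js = 0)
    (h2 : ∀ js (σ : Equiv.Perm (Fin p)), f js = ((Equiv.Perm.sign σ : ℤ) : ℂ) • f (js ∘ σ))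
    (h3 : ∀ js : Fin (p+1) → Fin n, ¬ LinearIndependent ℂ (g ∘ js) → Meets g z js →
      ∑ i : Fin (p+1), ((-1 : ℂ) ^ (i : ℕ)) • f (js ∘ i.succAbove) = 0) :
    ∃ F : OS g z p →ₗ[ℂ] N, ∀ js, F (mon g z js) = f js := by
  refine ⟨(OSRel g z p).liftQ (Finsupp.linearCombination ℂ f) ?_, fun js => ?_⟩
  · rw [OSRel, Submodule.span_le]
    rintro x ((⟨js, h, rfl⟩ | ⟨js, σ, rfl⟩) | ⟨js, h, hm, rfl⟩)
    · simp [h1 js h]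
    · simp only [SetLike.mem_coe, LinearMap.mem_ker, map_sub, map_smul,
        Finsupp.linearCombination_single, one_smul]
      rw [sub_eq_zero]
      exact h2 js σ
    · simp only [SetLike.mem_coe, LinearMap.mem_ker, map_sum, map_smul,
        Finsupp.linearCombination_single, one_smul]
      exact h3 js h hm
  · simp [mon]

lemma mon_cons_comm (js : Fin (p+1) → Fin n) (i : Fin (p+1)) :
    mon g z (Fin.cons (js i) (js ∘ i.succAbove)) = ((-1 : ℂ) ^ (i : ℕ)) • mon g z js := by
  rw [mon_perm js i.cycleRange.symm, comp_cycleRange, smul_smul]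
  simp [← mul_pow]

/-- The expansion `∂(e_j e_js) = e_js - e_j ∂ e_js`. -/
lemma bdry_cons (j : Fin n) (js : Fin (p+1) → Fin n) :
    bdry g z (Fin.cons j js : Fin (p+2) → Fin n) = mon g z js -
      ∑ i : Fin (p+1), ((-1 : ℂ) ^ (i : ℕ)) • mon g z (Fin.cons j (js ∘ i.succAbove)) := by
  rw [bdry, Fin.sum_univ_succ]
  simp only [cons_face, cons_face_zero, Fin.val_zero, pow_zero, one_smul, Fin.val_succ, pow_succ,
    mul_neg, mul_one, neg_smul, Finset.sum_neg_distrib, sub_eq_add_neg]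

/-- A permutation of `p + 1` letters restricts to the faces, with a computable sign. -/
lemma perm_face (σ : Equiv.Perm (Fin (p+1))) (i : Fin (p+1)) :
    ∃ τ : Equiv.Perm (Fin p), (∀ x, σ (i.succAbove x) = (σ i).succAbove (τ x)) ∧
      ((Equiv.Perm.sign τ : ℤ) : ℂ) =
        (-1) ^ (i : ℕ) * (-1) ^ (σ i : ℕ) * ((Equiv.Perm.sign σ : ℤ) : ℂ) := by
  set ρ : Equiv.Perm (Fin (p+1)) := (σ i).cycleRange * σ * i.cycleRange⁻¹ with hρ
  obtain ⟨⟨q, τ⟩, hτ⟩ := Equiv.Perm.decomposeFin.symm.surjective ρ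
  have h0 : ρ 0 = 0 := by
    simp [hρ]
  have hq : q = 0 := by
    rw [← hτ, Equiv.Perm.decomposeFin_symm_apply_zero] at h0
    exact h0
  subst hq
  refine ⟨τ, fun x => ?_, ?_⟩
  · have h1 : ρ x.succ = (τ x).succ := by
      rw [← hτ, Equiv.Perm.decomposeFin_symm_apply_succ]; simp
    have h2 : i.cycleRange⁻¹ x.succ = i.succAbove x := Fin.cycleRange_symm_succ i x
    rw [hρ, Equiv.Perm.mul_apply, Equiv.Perm.mul_apply, h2] at h1
    rw [← Fin.cycleRange_symm_succ (σ i), ← h1, Equiv.symm_apply_apply]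
  · have h1 : Equiv.Perm.sign τ = Equiv.Perm.sign ρ := by
      rw [← hτ, Equiv.Perm.decomposeFin.symm_sign]; simp
    rw [h1, hρ, Equiv.Perm.sign_mul, Equiv.Perm.sign_mul, Equiv.Perm.sign_inv,
      Fin.sign_cycleRange, Fin.sign_cycleRange]
    push_cast
    ring

lemma bdry_perm (js : Fin (p+1) → Fin n) (σ : Equiv.Perm (Fin (p+1))) :
    bdry g z js = ((Equiv.Perm.sign σ : ℤ) : ℂ) • bdry g z (js ∘ σ) := by
  rw [bdry, bdry, Finset.smul_sum, ← Equiv.sum_comp σ]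
  refine Finset.sum_congr rfl fun i _ => ?_
  obtain ⟨τ, h1, h2⟩ := perm_face σ i
  have : (js ∘ σ) ∘ i.succAbove = (js ∘ (σ i).succAbove) ∘ τ := by
    ext x; simp [h1]
  rw [this, mon_perm (js ∘ (σ i).succAbove) τ, smul_smul, smul_smul, h2]
  congr 1
  have : ((-1 : ℂ) ^ (σ i : ℕ)) * (-1) ^ (σ i : ℕ) = 1 := by rw [← mul_pow]; simp
  linear_combination (-1 : ℂ) ^ (i : ℕ) * ((Equiv.Perm.sign σ : ℤ) : ℂ) * this

/-- `∂∂ = 0` for tuples. -/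
lemma bdry_bdry (js : Fin (p+2) → Fin n) :
    ∑ i : Fin (p+2), ((-1 : ℂ) ^ (i : ℕ)) • bdry g z (js ∘ i.succAbove) = 0 := by
  simp only [bdry, Finset.smul_sum, smul_smul, ← pow_add]
  rw [← Fintype.sum_prod_type' (f := fun (i : Fin (p+2)) (j : Fin (p+1)) =>
    ((-1 : ℂ) ^ ((i : ℕ) + j)) • mon g z ((js ∘ i.succAbove) ∘ j.succAbove))]
  have key : ∀ (i : Fin (p+2)) (j : Fin (p+1)),
      ((-1 : ℂ) ^ ((i : ℕ) + j)) • mon g z ((js ∘ i.succAbove) ∘ j.succAbove) =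
      - (((-1 : ℂ) ^ ((i.succAbove j : ℕ) + j.predAbove i)) •
        mon g z ((js ∘ (i.succAbove j).succAbove) ∘ (j.predAbove i).succAbove)) := by
    intro i j
    rw [Fin.neg_one_pow_succAbove_add_predAbove, neg_smul, neg_neg]
    congr 2
    ext x
    simp only [Function.comp, Fin.succAbove_succAbove_succAbove_predAbove]
  refine Finset.sum_involution (fun x _ => (x.1.succAbove x.2, x.2.predAbove x.1)) ?_ ?_ ?_ ?_
  · rintro ⟨i, j⟩ _
    rw [key i j, neg_add_cancel]
  · rintro ⟨i, j⟩ _ _ h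
    exact Fin.succAbove_ne i j (congrArg Prod.fst h)
  · simp
  · rintro ⟨i, j⟩ _
    simp [Fin.succAbove_succAbove_predAbove, Fin.predAbove_predAbove_succAbove]

/-! ### The operators on Orlik–Solomon spaces -/

/-- The transposed flag differential: `∂` on independent monomials, zero on dependent tuples. It
respects the boundary relation of a dependent tuple with a common point because the dependent faces
of such a tuple have vanishing boundary, so the relation maps to `∂∂ = 0`. -/
lemma exists_D (g : Fin n → (E →ₗ[ℂ] ℂ)) (z : Fin n → ℂ) (p : ℕ) :
    ∃ D : OS g z (p+1) →ₗ[ℂ] OS g z p, ∀ js : Fin (p+1) → Fin n,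
      D (mon g z js) = if LinearIndependent ℂ (g ∘ js) then bdry g z js else 0 := by
  apply exists_lift
  · intro js h; rw [if_neg h]
  · intro js σ
    simp only [li_perm js σ, ← bdry_perm js σ, smul_ite, smul_zero]
  · intro js h hm
    refine (Finset.sum_congr rfl fun i _ => ?_).trans (bdry_bdry js)
    split_ifs with hi
    · rfl
    · obtain ⟨t, ht⟩ := hm
      rw [bdry_dep hi ⟨t, fun _ => ht _⟩]

/-- The transposed flag differential `OS^{p+1} → OS^p`. -/
noncomputable def D (g : Fin n → (E →ₗ[ℂ] ℂ)) (z : Fin n → ℂ) (p : ℕ) :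
    OS g z (p+1) →ₗ[ℂ] OS g z p := (exists_D g z p).choose

lemma D_mon {js : Fin (p+1) → Fin n} (h : LinearIndependent ℂ (g ∘ js)) :
    D g z p (mon g z js) = bdry g z js := by
  rw [D, (exists_D g z p).choose_spec, if_pos h]

lemma cons_perm (j : Fin n) (js : Fin p → Fin n) (σ : Equiv.Perm (Fin p)) :
    ∃ τ : Equiv.Perm (Fin (p+1)), (Fin.cons j (js ∘ σ) : Fin (p+1) → Fin n) =
      (Fin.cons j js : Fin (p+1) → Fin n) ∘ τ ∧ Equiv.Perm.sign τ = Equiv.Perm.sign σ := by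
  refine ⟨Equiv.Perm.decomposeFin.symm (0, σ), ?_, ?_⟩
  · ext x
    refine Fin.cases ?_ (fun x => ?_) x <;>
      simp [Equiv.Perm.decomposeFin_symm_apply_succ, Equiv.Perm.decomposeFin_symm_apply_zero]
  · rw [Equiv.Perm.decomposeFin.symm_sign]; simp

/-- Left multiplication by `(H_j)` respects the relations, also when `H_j` is parallel to the
intersection of a dependent tuple. -/
lemma exists_H (g : Fin n → (E →ₗ[ℂ] ℂ)) (z : Fin n → ℂ) (p : ℕ) (j : Fin n) :
    ∃ H : OS g z p →ₗ[ℂ] OS g z (p+1), ∀ js : Fin p → Fin n,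
      H (mon g z js) = mon g z (Fin.cons j js) := by
  apply exists_lift
  · intro js h
    exact mon_dep fun h' => h (li_cons.1 h').1
  · intro js σ
    obtain ⟨τ, h1, h2⟩ := cons_perm j js σ
    rw [h1, ← h2]
    exact mon_perm _ _
  · intro js h hm
    by_cases hc : Meets g z (Fin.cons j js : Fin (p+2) → Fin n)
    · have hd : ¬ LinearIndependent ℂ (g ∘ (Fin.cons j js : Fin (p+2) → Fin n)) :=
        fun h' => h (li_cons.1 h').1
      have := bdry_cons (g := g) (z := z) j js
      rw [bdry_dep hd hc, mon_dep h, zero_sub, eq_comm, neg_eq_zero] at this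
      exact this
    · -- the flat of `js` is parallel to `H_j`, so every term is dependent
      refine Finset.sum_eq_zero fun i _ => ?_
      rw [mon_dep, smul_zero]
      intro h'
      rw [li_cons] at h'
      have hj : g j ∉ Submodule.span ℂ (Set.range (g ∘ js)) := fun hj =>
        h'.2 (span_le_span_of_sub (span_face i h h'.1) hj)
      obtain ⟨t, h1, h2⟩ := exists_common js j hm hj
      exact hc ⟨t, fun x => by refine Fin.cases ?_ (fun x => ?_) x <;> simp [h1, h2]⟩

/-- Left multiplication by the generator `(H_j)`. -/
noncomputable def H (g : Fin n → (E →ₗ[ℂ] ℂ)) (z : Fin n → ℂ) (p : ℕ) (j : Fin n) :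
    OS g z p →ₗ[ℂ] OS g z (p+1) := (exists_H g z p j).choose

lemma H_mon (j : Fin n) (js : Fin p → Fin n) :
    H g z p j (mon g z js) = mon g z (Fin.cons j js) := (exists_H g z p j).choose_spec js

/-- Orlik–Solomon spaces are graded by flats: an independent face of a dependent tuple with a common
point has the same flat, so the relations are homogeneous. -/
lemma exists_P (g : Fin n → (E →ₗ[ℂ] ℂ)) (z : Fin n → ℂ) (p : ℕ) (C : Set (Fin n)) :
    ∃ P : OS g z p →ₗ[ℂ] OS g z p, ∀ js : Fin p → Fin n,
      P (mon g z js) = if flat g z js = C then mon g z js else 0 := by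
  apply exists_lift
  · intro js h; simp [mon_dep h]
  · intro js σ
    simp only [flat_perm js σ, ← mon_perm js σ, smul_ite, smul_zero]
  · intro js h hm
    have : ∀ i : Fin (p+1), ((-1 : ℂ) ^ (i : ℕ)) •
        (if flat g z (js ∘ i.succAbove) = C then mon g z (js ∘ i.succAbove) else 0) =
        if flat g z js = C then ((-1 : ℂ) ^ (i : ℕ)) • mon g z (js ∘ i.succAbove) else 0 := by
      intro i
      by_cases hi : LinearIndependent ℂ (g ∘ (js ∘ i.succAbove))
      · rw [flat_face i h hm hi, smul_ite, smul_zero]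
      · simp [mon_dep hi]
    simp only [this]
    split_ifs
    · exact bdry_dep h hm
    · simp

/-- The projection of the Orlik–Solomon space onto the summand of the flat `C`. -/
noncomputable def P (g : Fin n → (E →ₗ[ℂ] ℂ)) (z : Fin n → ℂ) (p : ℕ) (C : Set (Fin n)) :
    OS g z p →ₗ[ℂ] OS g z p := (exists_P g z p C).choose

lemma P_mon (C : Set (Fin n)) (js : Fin p → Fin n) :
    P g z p C (mon g z js) = if flat g z js = C then mon g z js else 0 :=
  (exists_P g z p C).choose_spec js

/-- Multiplication by `ν(a) = ∑ a_j (H_j)`. -/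
noncomputable def nu (g : Fin n → (E →ₗ[ℂ] ℂ)) (z a : Fin n → ℂ) (p : ℕ) :
    OS g z p →ₗ[ℂ] OS g z (p+1) := ∑ j, a j • H g z p j

lemma nu_mon (a : Fin n → ℂ) (js : Fin p → Fin n) :
    nu g z a p (mon g z js) = ∑ j, a j • mon g z (Fin.cons j js) := by
  simp [nu, LinearMap.sum_apply, H_mon]

/-! ### The contravariant form as a map from flags to the Orlik–Solomon space -/

/-- The contravariant map `S : 𝓕^p → OS^p`, `ψ ↦ ∑ a_{j₁}⋯a_{j_p} ψ(e_{j₁}⋯e_{j_p}) e_{j₁}⋯e_{j_p}`,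
with `𝓕^p` the dual of `OS^p`. The sum runs over ordered tuples, hence the factor `1/p!`. -/
noncomputable def shap (g : Fin n → (E →ₗ[ℂ] ℂ)) (z a : Fin n → ℂ) (p : ℕ) :
    Module.Dual ℂ (OS g z p) →ₗ[ℂ] OS g z p :=
  ((p.factorial : ℂ)⁻¹) • ∑ js : Fin p → Fin n, (∏ i, a (js i)) •
    (Module.Dual.eval ℂ (OS g z p) (mon g z js)).smulRight (mon g z js)

lemma shap_apply (a : Fin n → ℂ) (ψ : Module.Dual ℂ (OS g z p)) :
    shap g z a p ψ = ((p.factorial : ℂ)⁻¹) • ∑ js : Fin p → Fin n,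
      ((∏ i, a (js i)) * ψ (mon g z js)) • mon g z js := by
  simp [shap, LinearMap.sum_apply, smul_smul]

lemma shap_symm (a : Fin n → ℂ) (φ ψ : Module.Dual ℂ (OS g z p)) :
    φ (shap g z a p ψ) = ψ (shap g z a p φ) := by
  simp only [shap_apply, map_smul, map_sum, smul_eq_mul]
  congr 1
  refine Finset.sum_congr rfl fun js _ => ?_
  ring

lemma shap_P (a : Fin n → ℂ) (C : Set (Fin n)) (ψ : Module.Dual ℂ (OS g z p)) :
    shap g z a p (ψ ∘ₗ P g z p C) = P g z p C (shap g z a p ψ) := by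
  simp only [shap_apply, map_smul, map_sum, LinearMap.comp_apply, P_mon]
  congr 1
  refine Finset.sum_congr rfl fun js _ => ?_
  split_ifs <;> simp

/-- The contravariant map intertwines the flag differential and multiplication by `ν(a)`. -/
lemma shap_D (a : Fin n → ℂ) (ψ : Module.Dual ℂ (OS g z p)) :
    shap g z a (p+1) (ψ ∘ₗ D g z p) = nu g z a p (shap g z a p ψ) := by
  set G : Fin n → (Fin p → Fin n) → OS g z (p+1) := fun j s =>
    (a j * (∏ i, a (s i)) * ψ (mon g z s)) • mon g z (Fin.cons j s : Fin (p+1) → Fin n) with hG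
  have h1 : ∀ t : Fin (p+1) → Fin n,
      ((∏ i, a (t i)) * (ψ ∘ₗ D g z p) (mon g z t)) • mon g z t =
        ∑ i : Fin (p+1), G (t i) (t ∘ i.succAbove) := by
    intro t
    simp only [hG, mon_cons_comm]
    by_cases ht : LinearIndependent ℂ (g ∘ t)
    · rw [LinearMap.comp_apply, D_mon ht, bdry, map_sum, Finset.mul_sum, Finset.sum_smul]
      refine Finset.sum_congr rfl fun i _ => ?_
      rw [Fin.prod_univ_succAbove _ i, smul_smul, map_smul, smul_eq_mul]
      congr 1
      simp only [Function.comp]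
      ring
    · simp [mon_dep ht]
  have h2 : ∀ i : Fin (p+1), ∑ t : Fin (p+1) → Fin n, G (t i) (t ∘ i.succAbove) =
      ∑ j, ∑ s, G j s := by
    intro i
    rw [← Fintype.sum_prod_type' (f := G),
      ← Equiv.sum_comp (Fin.insertNthEquiv (fun _ => Fin n) i)]
    refine Finset.sum_congr rfl fun x _ => ?_
    have e1 : Fin.insertNthEquiv (fun _ => Fin n) i x i = x.1 :=
      Fin.insertNth_apply_same (α := fun _ => Fin n) i x.1 x.2
    have e2 : (Fin.insertNthEquiv (fun _ => Fin n) i x : Fin (p+1) → Fin n) ∘ i.succAbove = x.2 :=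
      funext fun l => Fin.insertNth_apply_succAbove (α := fun _ => Fin n) i x.1 x.2 l
    rw [e1, e2]
  have hL : shap g z a (p+1) (ψ ∘ₗ D g z p) =
      (((p+1).factorial : ℂ)⁻¹ * ((p+1 : ℕ) : ℂ)) • ∑ j, ∑ s, G j s := by
    rw [shap_apply, Finset.sum_congr rfl fun t _ => h1 t, Finset.sum_comm,
      Finset.sum_congr rfl fun i _ => h2 i, Finset.sum_const, Finset.card_univ,
      Fintype.card_fin, ← Nat.cast_smul_eq_nsmul ℂ, smul_smul]
  have h3 : ∀ s : Fin p → Fin n,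
      nu g z a p (((∏ i, a (s i)) * ψ (mon g z s)) • mon g z s) = ∑ j, G j s := by
    intro s
    rw [map_smul, nu_mon, Finset.smul_sum]
    refine Finset.sum_congr rfl fun j _ => ?_
    rw [smul_smul]
    simp only [hG]
    congr 1
    ring
  have hR : nu g z a p (shap g z a p ψ) = ((p.factorial : ℂ)⁻¹) • ∑ j, ∑ s, G j s := by
    rw [shap_apply, map_smul, map_sum, Finset.sum_congr rfl fun s _ => h3 s, Finset.sum_comm]
  have hsc : ((p+1).factorial : ℂ)⁻¹ * ((p+1 : ℕ) : ℂ) = (p.factorial : ℂ)⁻¹ := by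
    have h4 : ((p+1 : ℕ) : ℂ) ≠ 0 := Nat.cast_ne_zero.2 p.succ_ne_zero
    rw [Nat.factorial_succ, Nat.cast_mul, mul_inv_rev, mul_assoc, inv_mul_cancel₀ h4, mul_one]
  rw [hL, hR, hsc]

/-! ### Surjectivity of the contravariant map -/

/-- Projection to one of two independent summands. -/
lemma mem_span_part {ι M : Type*} [AddCommGroup M] [Module ℂ M] {A B : Submodule ℂ M}
    (hAB : Disjoint A B) (f : ι → M) (T : Set ι) (hA : ∀ l ∈ T, f l ∈ A) (hB : ∀ l ∉ T, f l ∈ B)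
    {x : M} (hx : x ∈ A) (hxf : x ∈ Submodule.span ℂ (Set.range f)) :
    x ∈ Submodule.span ℂ (f '' T) := by
  rw [← Set.image_univ, ← Set.union_compl_self T, Set.image_union, Submodule.span_union,
    Submodule.mem_sup] at hxf
  obtain ⟨y, hy, w, hw, rfl⟩ := hxf
  have hyA : y ∈ A := by
    refine (Submodule.span_le (p := A)).2 ?_ hy
    rintro _ ⟨l, hl, rfl⟩; exact hA l hl
  have hwB : w ∈ B := by
    refine (Submodule.span_le (p := B)).2 ?_ hw
    rintro _ ⟨l, hl, rfl⟩; exact hB l hl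
  have hwA : w ∈ A := by simpa using A.sub_mem hx hyA
  have : w = 0 := (Submodule.disjoint_def.1 hAB) w hwA hwB
  simpa [this] using hy

/-- Every nonempty flat `C` contains an irreducible component: a nonempty set `J ⊆ C` whose
normals are independent from the remaining ones and which is itself the flat of a dense edge,
hence has nonzero weight. -/
lemma exists_component {a : Fin n → ℂ} (hg : ∀ j, g j ≠ 0)
    (hdense : ∀ s : Finset (Fin n), s.Nonempty →
      ∀ t0 : E, (∀ j ∈ s, g j t0 + z j = 0) →
      (¬ ∃ J1 J2 : Set (Fin n), J1.Nonempty ∧ J2.Nonempty ∧ J1 ∩ J2 = ∅ ∧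
        J1 ∪ J2 = {j | ∀ t : E,
          (∀ j' ∈ s, g j' t + z j' = 0) → g j t + z j = 0} ∧
        Disjoint (Submodule.span ℂ (g '' J1)) (Submodule.span ℂ (g '' J2))) →
      ∑ j ∈ Finset.univ.filter (fun j => ∀ t : E,
          (∀ j' ∈ s, g j' t + z j' = 0) → g j t + z j = 0), a j ≠ 0)
    (js : Fin p → Fin n) (hm : Meets g z js) (hne : (flat g z js).Nonempty) :
    ∃ J ⊆ flat g z js,
      Disjoint (Submodule.span ℂ (g '' J)) (Submodule.span ℂ (g '' (flat g z js \ J))) ∧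
      ∑ j ∈ Finset.univ.filter (fun j => j ∈ J), a j ≠ 0 := by
  set C := flat g z js with hC
  obtain ⟨t₀, ht₀⟩ := hm
  let Sep : Set (Set (Fin n)) := {J | J.Nonempty ∧ J ⊆ C ∧
    Disjoint (Submodule.span ℂ (g '' J)) (Submodule.span ℂ (g '' (C \ J)))}
  obtain ⟨J, ⟨hJ1, hJ2, hJ3⟩, hmin⟩ := wellFounded_lt.has_min Sep
    ⟨C, hne, subset_rfl, by simp⟩
  refine ⟨J, hJ2, hJ3, ?_⟩
  have hJt : ∀ j ∈ J, g j t₀ + z j = 0 := fun j hj => hJ2 hj t₀ ht₀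
  -- `J` consists of all hyperplanes containing its intersection
  have hclosed : ∀ j, (∀ t : E, (∀ j' ∈ J.toFinset, g j' t + z j' = 0) → g j t + z j = 0) ↔
      j ∈ J := by
    intro j
    refine ⟨fun h => ?_, fun h t ht => ht j (by simpa using h)⟩
    by_contra hj
    have hjC : j ∈ C := fun t ht => h t fun j' hj' => hJ2 (by simpa using hj') t ht
    have h1 : g j ∈ Submodule.span ℂ (g '' J) := by
      have := mem_span_of_flat (g := g) (z := z) (fun i : J => (i : Fin n)) j t₀
        (fun i => hJt _ i.2) (fun t ht => h t fun j' hj' => ht ⟨j', by simpa using hj'⟩)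
      rwa [Set.range_comp, Subtype.range_coe] at this
    have h2 : g j ∈ Submodule.span ℂ (g '' (C \ J)) :=
      Submodule.subset_span ⟨j, ⟨hjC, hj⟩, rfl⟩
    exact hg j ((Submodule.disjoint_def.1 hJ3) _ h1 h2)
  have := hdense J.toFinset (by simpa using hJ1) t₀ (by simpa using hJt) ?_
  · simpa only [hclosed] using this
  · rintro ⟨K1, K2, hK1, hK2, hK, hU, hdis⟩
    have hU' : K1 ∪ K2 = J := by
      rw [hU]; ext j; exact hclosed j
    have hlt : K1 < J := by
      refine lt_of_le_of_ne (hU' ▸ Set.subset_union_left) ?_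
      rintro rfl
      obtain ⟨x, hx⟩ := hK2
      have : x ∈ K1 ∩ K2 := ⟨hU' ▸ Or.inr hx, hx⟩
      rw [hK] at this
      exact this
    refine hmin K1 ⟨hK1, hlt.le.trans hJ2, ?_⟩ hlt
    rw [← hU', Set.image_union, Submodule.span_union] at hJ3
    refine (hdis.disjoint_sup_right_of_disjoint_sup_left hJ3).mono_right ?_
    rw [← Submodule.span_union, ← Set.image_union]
    refine Submodule.span_mono (Set.image_mono ?_)
    intro x hx
    by_cases hx2 : x ∈ K2
    · exact Or.inl hx2
    · exact Or.inr ⟨hx.1, by rintro (h | h); exacts [hx.2 h, hx2 h]⟩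

/-- The key identity: if `J` is a component of the flat `C` of an independent monomial `e_js`, then
`ν(a) · ∑_{js i ∈ J} (-1)ⁱ e_{js ∖ js i}` has `C`-component `(∑_{j ∈ J} a_j) e_js`. -/
lemma component_identity (a : Fin n → ℂ) (js : Fin (p+1) → Fin n)
    (hl : LinearIndependent ℂ (g ∘ js)) (J : Set (Fin n)) (hJ : J ⊆ flat g z js)
    (hdis : Disjoint (Submodule.span ℂ (g '' J)) (Submodule.span ℂ (g '' (flat g z js \ J)))) :
    P g z (p+1) (flat g z js) (nu g z a p (∑ i : Fin (p+1), if js i ∈ J then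
      ((-1 : ℂ) ^ (i : ℕ)) • mon g z (js ∘ i.succAbove) else 0)) =
    (∑ j ∈ Finset.univ.filter (fun j => j ∈ J), a j) • mon g z js := by
  obtain ⟨t₀, ht₀⟩ := meets_of_li (z := z) js hl
  have hjs : ∀ i, js i ∈ flat g z js := fun i t ht => ht i
  have hspan : ∀ j ∈ flat g z js, g j ∈ Submodule.span ℂ (Set.range (g ∘ js)) := fun j hj =>
    mem_span_of_flat js j t₀ ht₀ hj
  have hd : ∀ j ∈ flat g z js,
      ¬ LinearIndependent ℂ (g ∘ (Fin.cons j js : Fin (p+2) → Fin n)) := fun j hj h' =>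
    (li_cons.1 h').2 (hspan j hj)
  have hm : ∀ j ∈ flat g z js, Meets g z (Fin.cons j js : Fin (p+2) → Fin n) := fun j hj =>
    ⟨t₀, fun x => by refine Fin.cases ?_ (fun x => ?_) x <;> simp [ht₀, hj t₀ ht₀]⟩
  have hA : ∀ l ∈ {l | js l ∈ J}, (g ∘ js) l ∈ Submodule.span ℂ (g '' J) := fun l hl =>
    Submodule.subset_span ⟨_, hl, rfl⟩
  have hB : ∀ l ∉ {l | js l ∈ J}, (g ∘ js) l ∈ Submodule.span ℂ (g '' (flat g z js \ J)) :=
    fun l hl => Submodule.subset_span ⟨_, ⟨hjs l, hl⟩, rfl⟩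
  have hsub : ∀ (i : Fin (p+1)) (T : Set (Fin (p+1))), i ∉ T →
      Submodule.span ℂ ((g ∘ js) '' T) ≤
        Submodule.span ℂ (Set.range (g ∘ (js ∘ i.succAbove))) := by
    intro i T hi
    refine Submodule.span_mono ?_
    rintro _ ⟨l, hl, rfl⟩
    obtain ⟨m, rfl⟩ := Fin.exists_succAbove_eq (x := l) (y := i) (by rintro rfl; exact hi hl)
    exact ⟨m, rfl⟩
  have key : ∀ j, P g z (p+1) (flat g z js) (H g z p j (∑ i : Fin (p+1), if js i ∈ J then
      ((-1 : ℂ) ^ (i : ℕ)) • mon g z (js ∘ i.succAbove) else 0)) =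
      if j ∈ J then mon g z js else 0 := by
    intro j
    rw [map_sum, map_sum]
    by_cases hjC : j ∈ flat g z js
    · have hP : ∀ i : Fin (p+1), P g z (p+1) (flat g z js)
          (mon g z (Fin.cons j (js ∘ i.succAbove) : Fin (p+1) → Fin n)) =
          mon g z (Fin.cons j (js ∘ i.succAbove)) := by
        intro i
        by_cases hi : LinearIndependent ℂ
            (g ∘ (Fin.cons j (js ∘ i.succAbove) : Fin (p+1) → Fin n))
        · rw [P_mon, if_pos]
          have h1 := flat_face (z := z) (js := (Fin.cons j js : Fin (p+2) → Fin n)) i.succ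
            (hd j hjC) (hm j hjC) (by rwa [cons_face])
          have h2 := flat_face (z := z) (js := (Fin.cons j js : Fin (p+2) → Fin n)) 0
            (hd j hjC) (hm j hjC) (by rwa [cons_face_zero])
          rw [cons_face] at h1
          rw [cons_face_zero] at h2
          rw [h1, h2]
        · rw [mon_dep hi, map_zero]
      by_cases hjJ : j ∈ J
      · rw [if_pos hjJ]
        have h1 := bdry_cons (g := g) (z := z) j js
        rw [bdry_dep (hd j hjC) (hm j hjC), eq_comm, sub_eq_zero] at h1
        rw [h1]
        refine Finset.sum_congr rfl fun i _ => ?_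
        split_ifs with hi
        · rw [map_smul, map_smul, H_mon, hP]
        · rw [map_zero, map_zero, mon_dep, smul_zero]
          intro h'
          exact (li_cons.1 h').2 (hsub i {l | js l ∈ J} hi (mem_span_part hdis (g ∘ js) _ hA hB
            (Submodule.subset_span ⟨_, hjJ, rfl⟩) (hspan j hjC)))
      · rw [if_neg hjJ]
        refine Finset.sum_eq_zero fun i _ => ?_
        split_ifs with hi
        · rw [map_smul, map_smul, H_mon, mon_dep, map_zero, smul_zero]
          intro h'
          exact (li_cons.1 h').2 (hsub i {l | js l ∈ J}ᶜ (fun h => h hi)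
            (mem_span_part hdis.symm (g ∘ js) _ hB
              (fun l hl => hA l (not_not.1 hl))
              (Submodule.subset_span ⟨_, ⟨hjC, hjJ⟩, rfl⟩) (hspan j hjC)))
        · simp
    · rw [if_neg (fun h => hjC (hJ h))]
      refine Finset.sum_eq_zero fun i _ => ?_
      split_ifs with hi
      · rw [map_smul, map_smul, H_mon, P_mon, if_neg, smul_zero]
        intro h
        apply hjC
        rw [← h]
        intro t ht
        simpa using ht 0
      · simp
  rw [nu, LinearMap.sum_apply, map_sum, Finset.sum_smul, Finset.sum_filter]
  refine Finset.sum_congr rfl fun j _ => ?_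
  rw [LinearMap.smul_apply, map_smul, key]
  split_ifs <;> simp

/-- Surjectivity, by induction on the degree. The image of the contravariant map is closed under
the flat projections and contains `ν(a)` times the image in the previous degree, so it contains
`a_J e_js`, where `a_J ≠ 0` is the weight of a component of the flat of `js`. -/
lemma shap_surjective {a : Fin n → ℂ} (hg : ∀ j, g j ≠ 0)
    (hdense : ∀ s : Finset (Fin n), s.Nonempty →
      ∀ t0 : E, (∀ j ∈ s, g j t0 + z j = 0) →
      (¬ ∃ J1 J2 : Set (Fin n), J1.Nonempty ∧ J2.Nonempty ∧ J1 ∩ J2 = ∅ ∧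
        J1 ∪ J2 = {j | ∀ t : E,
          (∀ j' ∈ s, g j' t + z j' = 0) → g j t + z j = 0} ∧
        Disjoint (Submodule.span ℂ (g '' J1)) (Submodule.span ℂ (g '' J2))) →
      ∑ j ∈ Finset.univ.filter (fun j => ∀ t : E,
          (∀ j' ∈ s, g j' t + z j' = 0) → g j t + z j = 0), a j ≠ 0) :
    ∀ p, Function.Surjective (shap g z a p)
  | 0 => by
    intro x
    refine OS_induction (M := LinearMap.range (shap g z a 0)) (fun js hjs => ?_) x
    obtain ⟨F, hF⟩ := exists_lift (g := g) (z := z) (p := 0) (N := ℂ) (fun _ => 1)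
      (fun js h => by
        exfalso; exact h linearIndependent_empty_type)
      (fun js σ => by
        rw [Subsingleton.elim σ 1]; simp)
      (fun js h _ => by
        exfalso
        apply h
        have : Unique (Fin (0+1)) := inferInstanceAs (Unique (Fin 1))
        rw [linearIndependent_unique_iff]
        exact hg _)
    refine ⟨F, ?_⟩
    rw [shap_apply]
    simp [hF, Subsingleton.elim default js]
  | p+1 => by
    intro x
    refine OS_induction (M := LinearMap.range (shap g z a (p+1))) (fun js hjs => ?_) x
    obtain ⟨J, hJ, hdis, hne⟩ := exists_component hg hdense js (meets_of_li js hjs)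
      ⟨js 0, fun t ht => ht 0⟩
    have h := component_identity a js hjs J hJ hdis
    obtain ⟨ψ, hψ⟩ := shap_surjective hg hdense p (∑ i : Fin (p+1), if js i ∈ J then
      ((-1 : ℂ) ^ (i : ℕ)) • mon g z (js ∘ i.succAbove) else 0)
    rw [← hψ, ← shap_D, ← shap_P] at h
    rw [← inv_smul_smul₀ hne (mon g z js), ← h]
    exact Submodule.smul_mem _ _ ⟨_, rfl⟩

/-! ### Exactness of the flag complex below the top degree -/

lemma D_D (x : OS g z (p+2)) : D g z p (D g z (p+1) x) = 0 := by
  have : D g z p ∘ₗ D g z (p+1) = 0 := by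
    refine OS_hom_ext fun js hjs => ?_
    rw [LinearMap.comp_apply, D_mon hjs, bdry, map_sum, LinearMap.zero_apply, ← bdry_bdry js]
    refine Finset.sum_congr rfl fun i _ => ?_
    rw [map_smul, D_mon (li_face i hjs)]
  exact LinearMap.congr_fun this x

variable (g z) in
/-- The span of the monomials whose normals span a space containing `g j` for all `j ∈ J`. -/
noncomputable def U (p : ℕ) (J : Finset (Fin n)) : Submodule ℂ (OS g z p) :=
  Submodule.span ℂ {x | ∃ js : Fin p → Fin n, LinearIndependent ℂ (g ∘ js) ∧
    (∀ j ∈ J, g j ∈ Submodule.span ℂ (Set.range (g ∘ js))) ∧ x = mon g z js}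

/-- Multiplication by `(H_j)` is a homotopy from the identity to an operator with values in
monomials whose normals span a space containing `g j`; this operator does not shrink the span of
the normals of a monomial. On cycles the last term vanishes. -/
lemma homotopy_mem (j : Fin n) (J : Finset (Fin n)) (x : OS g z (p+1)) (hx : x ∈ U g z (p+1) J) :
    x - D g z (p+1) (H g z (p+1) j x) - H g z p j (D g z p x) ∈ U g z (p+1) (insert j J) := by
  rw [U] at hx
  induction hx using Submodule.span_induction with
  | zero => simp
  | add x y _ _ hx hy =>
    convert Submodule.add_mem _ hx hy using 1
    simp only [map_add]; abel
  | smul c x _ hx =>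
    convert Submodule.smul_mem _ c hx using 1
    simp only [map_smul, smul_sub]
  | mem x hx =>
    obtain ⟨js, hl, hJ, rfl⟩ := hx
    have h1 : H g z p j (D g z p (mon g z js)) =
        ∑ i : Fin (p+1), ((-1 : ℂ) ^ (i : ℕ)) • mon g z (Fin.cons j (js ∘ i.succAbove)) := by
      simp only [D_mon hl, bdry, map_sum, map_smul, H_mon]
    rw [h1, H_mon]
    by_cases hc : LinearIndependent ℂ (g ∘ (Fin.cons j js : Fin (p+2) → Fin n))
    · rw [D_mon hc, bdry_cons, sub_sub_cancel, sub_self]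
      exact Submodule.zero_mem _
    · have hj : g j ∈ Submodule.span ℂ (Set.range (g ∘ js)) := by
        by_contra h
        exact hc (li_cons.2 ⟨hl, h⟩)
      rw [mon_dep hc, map_zero, sub_zero]
      refine Submodule.sub_mem _ (Submodule.subset_span ⟨js, hl, ?_, rfl⟩)
        (Submodule.sum_mem _ fun i _ => Submodule.smul_mem _ _ ?_)
      · intro j' hj'
        rcases Finset.mem_insert.1 hj' with rfl | hj'
        exacts [hj, hJ _ hj']
      · by_cases hi : LinearIndependent ℂ (g ∘ (Fin.cons j (js ∘ i.succAbove) : Fin (p+1) → Fin n))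
        · have hf := span_face (js := (Fin.cons j js : Fin (p+2) → Fin n)) i.succ hc
            (by rwa [cons_face])
          rw [cons_face] at hf
          have hle := span_le_span_of_sub (js := js) (fun l => by simpa using hf l.succ)
          refine Submodule.subset_span ⟨_, hi, ?_, rfl⟩
          intro j' hj'
          rcases Finset.mem_insert.1 hj' with rfl | hj'
          exacts [hle hj, hle (hJ _ hj')]
        · rw [mon_dep hi]
          exact Submodule.zero_mem _

/-- Applying the homotopies of all hyperplanes in turn: each cycle is homologous to one supported
on monomials whose normals span a space containing all `g j`. -/
lemma cycle_reduction (x : OS g z (p+1)) (hx : D g z p x = 0) (J : Finset (Fin n)) :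
    ∃ y ∈ U g z (p+1) J, D g z p y = 0 ∧ x - y ∈ LinearMap.range (D g z (p+1)) := by
  induction J using Finset.induction_on with
  | empty =>
    refine ⟨x, OS_induction (M := U g z (p+1) ∅)
      (fun js hjs => Submodule.subset_span ⟨js, hjs, by simp, rfl⟩) x, hx, ?_⟩
    rw [sub_self]; exact Submodule.zero_mem _
  | insert j J _ ih =>
    obtain ⟨y, hy, hy0, hxy⟩ := ih
    have h := homotopy_mem j J y hy
    rw [hy0, map_zero, sub_zero] at h
    refine ⟨_, h, by rw [map_sub, hy0, D_D, sub_zero], ?_⟩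
    rw [← sub_add]
    exact Submodule.add_mem _ hxy ⟨_, rfl⟩

/-- The `p + 1 ≤ k` normals of a monomial cannot span a space containing all `g j`, since `k + 1` of
the latter are independent; hence every cycle is a boundary. -/
lemma exact_D {k : ℕ} (hess : ∃ js : Fin (k+1) → Fin n, LinearIndependent ℂ (g ∘ js))
    (hp : p + 1 ≤ k) : LinearMap.ker (D g z p) = LinearMap.range (D g z (p+1)) := by
  apply le_antisymm
  · intro x hx
    obtain ⟨y, hy, -, hxy⟩ := cycle_reduction x hx Finset.univ
    have hU : U g z (p+1) Finset.univ = ⊥ := by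
      rw [U, Submodule.span_eq_bot]
      rintro _ ⟨js, -, hs, -⟩
      exfalso
      obtain ⟨js₀, h₀⟩ := hess
      have h1 := span_le_span_of_sub (js := js₀) (js' := js) (fun i => hs _ (Finset.mem_univ _))
      have := FiniteDimensional.span_of_finite ℂ (Set.finite_range (g ∘ js))
      have h2 := Submodule.finrank_mono h1
      rw [finrank_span_eq_card h₀, Fintype.card_fin] at h2
      have h3 := finrank_range_le_card (R := ℂ) (g ∘ js)
      rw [Fintype.card_fin, Set.finrank] at h3
      omega
    rw [hU, Submodule.mem_bot] at hy
    rwa [hy, sub_zero] at hxy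
  · rintro _ ⟨x, rfl⟩
    exact D_D x

/-- Exactness in degree `0`, which needs at least one hyperplane. -/
lemma range_D_zero (hg : ∀ j, g j ≠ 0) [Nonempty (Fin n)] :
    LinearMap.range (D g z 0) = ⊤ := by
  rw [eq_top_iff]
  intro x _
  refine OS_induction (fun js _ => ?_) x
  obtain ⟨j⟩ := ‹Nonempty (Fin n)›
  have hl : LinearIndependent ℂ (g ∘ (Fin.cons j js : Fin 1 → Fin n)) := by
    have : Unique (Fin (0+1)) := inferInstanceAs (Unique (Fin 1))
    rw [linearIndependent_unique_iff]
    exact hg _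
  refine ⟨mon g z (Fin.cons j js), ?_⟩
  rw [D_mon hl, bdry, Fin.sum_univ_one, cons_face_zero]
  simp

/-- Below the top degree the partial Euler characteristic is, up to sign, the rank of the
next differential. -/
lemma euler_partial {k : ℕ} (hg : ∀ j, g j ≠ 0)
    (hess : ∃ js : Fin (k+1) → Fin n, LinearIndependent ℂ (g ∘ js)) :
    ∀ m ≤ k, ∑ p ∈ Finset.range (m+1), (-1 : ℤ) ^ p * (Module.finrank ℂ (OS g z p) : ℤ) =
      (-1) ^ m * (Module.finrank ℂ (LinearMap.range (D g z m)) : ℤ)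
  | 0, _ => by
    have : Nonempty (Fin n) := ⟨hess.choose 0⟩
    rw [Finset.sum_range_one, range_D_zero hg, finrank_top]
  | m+1, hm => by
    rw [Finset.sum_range_succ, euler_partial hg hess m (by omega)]
    have h := LinearMap.finrank_range_add_finrank_ker (D g z m)
    rw [exact_D hess hm] at h
    rw [← h]
    push_cast
    ring

/-! ### Comparison with the form on unordered subsets -/

/-- The sum of a symmetric function over injective tuples is `p!` times the sum over subsets. -/
lemma sum_tuples (f : (Fin p → Fin n) → ℂ) (h0 : ∀ js, ¬ Function.Injective js → f js = 0)
    (hperm : ∀ js (σ : Equiv.Perm (Fin p)), f (js ∘ σ) = f js) :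
    ∑ js, f js = (p.factorial : ℂ) * ∑ s : {s : Finset (Fin n) // s.card = p},
      f (fun i => (s.1.orderIsoOfFin s.2 i : Fin n)) := by
  let F : {s : Finset (Fin n) // s.card = p} × Equiv.Perm (Fin p) → (Fin p → Fin n) :=
    fun x => (fun i => (x.1.1.orderIsoOfFin x.1.2 i : Fin n)) ∘ x.2
  have himg : ∀ x, Finset.univ.image (F x) = x.1.1 := by
    rintro ⟨⟨s, hs⟩, σ⟩
    ext j
    simp only [F, Finset.mem_image, Finset.mem_univ, true_and, Function.comp]
    constructor
    · rintro ⟨i, rfl⟩; exact Subtype.prop _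
    · intro hj
      exact ⟨σ.symm ((s.orderIsoOfFin hs).symm ⟨j, hj⟩), by simp⟩
  have hinj0 : ∀ s : {s : Finset (Fin n) // s.card = p},
      Function.Injective (fun i => (s.1.orderIsoOfFin s.2 i : Fin n)) := fun s =>
    Subtype.val_injective.comp (s.1.orderIsoOfFin s.2).injective
  have hFinj : Function.Injective F := by
    rintro ⟨s, σ⟩ ⟨s', σ'⟩ h
    have : s = s' := by
      apply Subtype.ext
      rw [← himg (s, σ), ← himg (s', σ'), h]
    subst this
    congr 1
    ext i
    have := congrFun h i
    exact congrArg Fin.val (hinj0 s this)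
  have hrange : ∀ js ∉ Set.range F, f js = 0 := by
    intro js hjs
    apply h0
    intro hi
    apply hjs
    have hc : (Finset.univ.image js).card = p := by
      rw [Finset.card_image_of_injective _ hi, Finset.card_univ, Fintype.card_fin]
    let τ : Fin p → Fin p := fun i =>
      ((Finset.univ.image js).orderIsoOfFin hc).symm ⟨js i, by simp⟩
    have hτ : Function.Injective τ := by
      intro i i' h
      have := ((Finset.univ.image js).orderIsoOfFin hc).symm.injective h
      exact hi (congrArg Subtype.val this)
    refine ⟨(⟨_, hc⟩, Equiv.ofBijective τ (Finite.injective_iff_bijective.1 hτ)), ?_⟩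
    ext i
    simp only [F, τ, Function.comp, Equiv.ofBijective_apply, OrderIso.apply_symm_apply]
  rw [← Fintype.sum_of_injective F hFinj (fun x => f (fun i =>
    (x.1.1.orderIsoOfFin x.1.2 i : Fin n))) f hrange (fun x => by rw [hperm]),
    Fintype.sum_prod_type, Finset.mul_sum]
  refine Finset.sum_congr rfl fun s _ => ?_
  change (∑ _σ : Equiv.Perm (Fin p), f (fun i => (s.1.orderIsoOfFin s.2 i : Fin n))) = _
  rw [Finset.sum_const, Finset.card_univ, Fintype.card_perm, Fintype.card_fin, nsmul_eq_mul]

/-- The pairing with the contravariant map is the contravariant form. -/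
lemma pairing_shap (a : Fin n → ℂ) (φ ψ : Module.Dual ℂ (OS g z p)) :
    φ (shap g z a p ψ) = ∑ s : {s : Finset (Fin n) // s.card = p},
      (∏ j ∈ s.1, a j) * φ (mon g z fun i => (s.1.orderIsoOfFin s.2 i : Fin n)) *
        ψ (mon g z fun i => (s.1.orderIsoOfFin s.2 i : Fin n)) := by
  have h := sum_tuples (n := n) (p := p)
    (fun js => (∏ i, a (js i)) * φ (mon g z js) * ψ (mon g z js)) ?_ ?_
  · have hp : (p.factorial : ℂ) ≠ 0 := Nat.cast_ne_zero.2 p.factorial_ne_zero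
    rw [shap_apply, map_smul, map_sum, smul_eq_mul]
    calc _ = (p.factorial : ℂ)⁻¹ * ∑ js : Fin p → Fin n,
          (∏ i, a (js i)) * φ (mon g z js) * ψ (mon g z js) := by
          congr 1
          refine Finset.sum_congr rfl fun js _ => ?_
          rw [map_smul, smul_eq_mul]; ring
      _ = _ := by
          rw [h, inv_mul_cancel_left₀ hp]
          refine Finset.sum_congr rfl fun s _ => ?_
          congr 2
          rw [← Finset.prod_coe_sort s.1 a]
          exact Equiv.prod_comp (s.1.orderIsoOfFin s.2).toEquiv (fun j => a j)
  · intro js hjs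
    rw [mon_dep fun h => hjs h.injective.of_comp]
    simp
  · intro js σ
    have h1 : ∏ i, a ((js ∘ σ) i) = ∏ i, a (js i) := Equiv.prod_comp σ (fun i => a (js i))
    simp only [h1]
    rw [mon_perm js σ, map_smul, map_smul, smul_eq_mul, smul_eq_mul]
    have h2 : ((Equiv.Perm.sign σ : ℤ) : ℂ) * ((Equiv.Perm.sign σ : ℤ) : ℂ) = 1 := by
      rw [← Int.cast_mul, ← Units.val_mul, Int.units_mul_self]; simp
    linear_combination -(∏ i, a (js i)) * φ (mon g z (js ∘ σ)) * ψ (mon g z (js ∘ σ)) * h2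

/-- The rank of multiplication by `ν(a)` is that of the flag differential, once the contravariant
map is bijective. -/
lemma finrank_range_nu {a : Fin n → ℂ} (hs : ∀ p, Function.Surjective (shap g z a p)) (p : ℕ) :
    Module.finrank ℂ (LinearMap.range (nu g z a p)) =
      Module.finrank ℂ (LinearMap.range (D g z p)) := by
  have hinj : Function.Injective (shap g z a (p+1)) :=
    (LinearMap.injective_iff_surjective_of_finrank_eq_finrank Subspace.dual_finrank_eq).2 (hs _)
  have h : nu g z a p ∘ₗ shap g z a p = shap g z a (p+1) ∘ₗ (D g z p).dualMap := by
    ext ψ : 1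
    exact (shap_D a ψ).symm
  have h1 : LinearMap.range (nu g z a p) =
      (LinearMap.range (D g z p).dualMap).map (shap g z a (p+1)) := by
    rw [← LinearMap.range_comp, ← h, LinearMap.range_comp,
      LinearMap.range_eq_top.2 (hs p), Submodule.map_top]
  rw [h1, ← (Submodule.equivMapOfInjective (shap g z a (p+1)) hinj _).finrank_eq]
  exact LinearMap.finrank_range_dualMap_eq_finrank_range _

end OSArr


/-- **Nondegeneracy of the contravariant form and the dimension of the singular subspace.**
An essential arrangement of `n` affine hyperplanes `H_j = {g_j(t) + z_j = 0}` in `ℂ^{k+1}` with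
nonzero weights `a_j` is encoded as follows.  `Rel p` is the submodule of relations of the
degree-`p` Orlik–Solomon space inside the free module on `p`-tuples (vanishing of dependent
tuples, skew-symmetry, and the boundary relations for dependent `(p+1)`-tuples with nonempty
intersection), so `OS^p = Free_p / Rel p` and the flag space `𝓕^p = OS^p∗` is the dual
annihilator of `Rel p`.  `S p` is the contravariant form (sum over unordered `p`-subsets),
`dmap` the lift of multiplication by `ν(a) = Σ a_j (H_j)`, and `Sing` the space of singular
vectors (annihilator of `ν(a)·OS^k`).  If no dense edge has weight zero (irreducibility stated
via trivially–intersecting spans of normals), then the contravariant form is nondegenerate on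
every flag space, and `dim Sing 𝓕^{k+1}` equals the absolute value of the Euler characteristic
of the complement, `|χ(U)| = |Σ_p (−1)^p dim OS^p|`. -/
theorem contravariant_nondegenerate_and_dim_sing
    (k n : ℕ)
    (g : Fin n → ((Fin (k+1) → ℂ) →ₗ[ℂ] ℂ)) (z a : Fin n → ℂ)
    (ha : ∀ j, a j ≠ 0) (hg : ∀ j, g j ≠ 0)
    (hess : ∃ js : Fin (k+1) → Fin n, LinearIndependent ℂ (g ∘ js))
    (hdense : ∀ s : Finset (Fin n), s.Nonempty →
      ∀ t0 : Fin (k+1) → ℂ, (∀ j ∈ s, g j t0 + z j = 0) →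
      (¬ ∃ J1 J2 : Set (Fin n), J1.Nonempty ∧ J2.Nonempty ∧ J1 ∩ J2 = ∅ ∧
        J1 ∪ J2 = {j | ∀ t : Fin (k+1) → ℂ,
          (∀ j' ∈ s, g j' t + z j' = 0) → g j t + z j = 0} ∧
        Disjoint (Submodule.span ℂ (g '' J1)) (Submodule.span ℂ (g '' J2))) →
      ∑ j ∈ Finset.univ.filter (fun j => ∀ t : Fin (k+1) → ℂ,
          (∀ j' ∈ s, g j' t + z j' = 0) → g j t + z j = 0), a j ≠ 0)
    (Rel : ∀ p : ℕ, Submodule ℂ ((Fin p → Fin n) →₀ ℂ))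
    (hRel : ∀ p : ℕ, Rel p = Submodule.span ℂ (
      {x | ∃ js : Fin p → Fin n, ¬ LinearIndependent ℂ (g ∘ js) ∧
        x = Finsupp.single js 1} ∪
      {x | ∃ (js : Fin p → Fin n) (σ : Equiv.Perm (Fin p)),
        x = Finsupp.single js 1 -
          ((Equiv.Perm.sign σ : ℤ) : ℂ) • Finsupp.single (js ∘ σ) 1} ∪
      {x | ∃ js : Fin (p+1) → Fin n, ¬ LinearIndependent ℂ (g ∘ js) ∧
        (∃ t : Fin (k+1) → ℂ, ∀ i, g (js i) t + z (js i) = 0) ∧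
        x = ∑ i : Fin (p+1), ((-1 : ℂ) ^ (i : ℕ)) •
          Finsupp.single (js ∘ i.succAbove) 1}))
    (S : ∀ p : ℕ, Module.Dual ℂ ((Fin p → Fin n) →₀ ℂ) →
      Module.Dual ℂ ((Fin p → Fin n) →₀ ℂ) → ℂ)
    (hSdef : ∀ p φ ψ, S p φ ψ = ∑ s : {s : Finset (Fin n) // s.card = p},
      (∏ j ∈ s.1, a j) *
        φ (Finsupp.single (fun i => (s.1.orderIsoOfFin s.2 i : Fin n)) 1) *
        ψ (Finsupp.single (fun i => (s.1.orderIsoOfFin s.2 i : Fin n)) 1))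
    (dmap : ((Fin k → Fin n) →₀ ℂ) →ₗ[ℂ] ((Fin (k+1) → Fin n) →₀ ℂ))
    (hdmap : ∀ js : Fin k → Fin n, dmap (Finsupp.single js 1) =
      ∑ j : Fin n, a j • Finsupp.single (Fin.cons j js : Fin (k+1) → Fin n) 1)
    (Sing : Submodule ℂ (Module.Dual ℂ ((Fin (k+1) → Fin n) →₀ ℂ)))
    (hSing : Sing = (Rel (k+1)).dualAnnihilator ⊓ (LinearMap.range dmap).dualAnnihilator) :
    (∀ p ≤ k + 1, ∀ φ ∈ (Rel p).dualAnnihilator,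
      (∀ ψ ∈ (Rel p).dualAnnihilator, S p φ ψ = 0) → φ = 0) ∧
    (Module.finrank ℂ Sing : ℤ) =
      |∑ p ∈ Finset.range (k+2), (-1 : ℤ) ^ p *
        (Module.finrank ℂ (((Fin p → Fin n) →₀ ℂ) ⧸ Rel p) : ℤ)| := by
  have hRel' : Rel = OSArr.OSRel g z := funext hRel
  subst hRel'
  have hsurj := OSArr.shap_surjective (a := a) hg hdense
  refine ⟨fun p _ φ hφ hS => ?_, ?_⟩
  · let φ' : Module.Dual ℂ (OSArr.OS g z p) := (OSArr.OSRel g z p).liftQ φ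
      (fun x hx => (Submodule.mem_dualAnnihilator φ).1 hφ x hx)
    have hφ' : ∀ x, φ' x = 0 := by
      intro x
      obtain ⟨ψ, rfl⟩ := hsurj p x
      have h := hS (ψ ∘ₗ (OSArr.OSRel g z p).mkQ) ((Submodule.mem_dualAnnihilator _).2
        fun w hw => by simp [(Submodule.Quotient.mk_eq_zero _).2 hw])
      rw [hSdef] at h
      rw [OSArr.pairing_shap, ← h]
      rfl
    exact LinearMap.ext fun x => hφ' ((OSArr.OSRel g z p).mkQ x)
  · rw [← Submodule.dualAnnihilator_sup_eq] at hSing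
    set R := OSArr.OSRel g z (k+1) with hR
    -- the image of `range dmap` in `OS^{k+1}` is the image of multiplication by `ν(a)`
    have hcomp : R.mkQ ∘ₗ dmap = OSArr.nu g z a k ∘ₗ (OSArr.OSRel g z k).mkQ := by
      ext js
      simp only [LinearMap.comp_apply, Finsupp.lsingle_apply]
      rw [hdmap]
      have := OSArr.nu_mon (g := g) (z := z) a js
      rw [OSArr.mon] at this
      rw [this]
      simp only [map_sum, map_smul]
      rfl
    have hmap : (R ⊔ LinearMap.range dmap).map R.mkQ = LinearMap.range (OSArr.nu g z a k) := by
      rw [Submodule.map_sup, Submodule.mkQ_map_self, bot_sup_eq, ← LinearMap.range_comp, hcomp,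
        LinearMap.range_comp, Submodule.range_mkQ, Submodule.map_top]
    have h1 : Module.finrank ℂ Sing =
        Module.finrank ℂ (OSArr.OS g z (k+1) ⧸ LinearMap.range (OSArr.nu g z a k)) := by
      rw [hSing, ← (Submodule.dualQuotEquivDualAnnihilator _).finrank_eq,
        Subspace.dual_finrank_eq, ← hmap]
      exact (Submodule.quotientQuotientEquivQuotient R (R ⊔ LinearMap.range dmap)
        le_sup_left).finrank_eq.symm
    have h2 := Submodule.finrank_quotient_add_finrank (LinearMap.range (OSArr.nu g z a k))
    rw [← h1, OSArr.finrank_range_nu hsurj] at h2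
    have h3 := OSArr.euler_partial (z := z) hg hess k le_rfl
    have h4 : ∑ p ∈ Finset.range (k+2), (-1 : ℤ) ^ p *
        (Module.finrank ℂ (OSArr.OS g z p) : ℤ) =
        (-1) ^ (k+1) * (Module.finrank ℂ Sing : ℤ) := by
      rw [Finset.sum_range_succ, h3, ← h2]
      push_cast
      ring
    rw [h4, abs_mul, abs_pow, abs_neg, abs_one, one_pow, one_mul, Nat.abs_cast]
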